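/- Let U ⊆ ℂ* × ℂ be an open set such that for every c > 0 and ε > 0 there exists R > 0 with T(c,ε,R) := {(z,ξ) ∈ ℂ* × ℂ : e^{−c} < |z| < e^{c}, |ξ| > R, arg ξ ∈ (−ϖ+ε, π−ϖ−ε)} ⊆ U. Let f : U → ℂ be holomorphic and bounded, and suppose f(q·z, ξ−1) = f(z,ξ) whenever both (z,ξ) ∈ U and (q·z, ξ−1) ∈ U. Then there exist r > 0 and a holomorphic function g on the disc {w ∈ ℂ : |w| < r} such that for every c > 0 and ε > 0 there is R > 0 with f(z,ξ) = g(z·exp(2πiτξ)) for all (z,ξ) ∈ T(c,ε,R); that is, f is a first integral of the fibration by the level sets of Y(z,ξ) = z·exp(2πiτξ). If moreover the supremum of |f| over T(c,ε,R) tends to 0 as R → ∞ for every c, ε, then g(0) = 0. -/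

import Mathlib

open Complex

/-- The sector `T(c,ε,R)` of directions `arg ξ ∈ (−ϖ+ε, π − ϖ − ε)`, `ϖ = arg τ`. -/
noncomputable def Tsector (τ : ℂ) (c ε R : ℝ) : Set (ℂ × ℂ) :=
  {p : ℂ × ℂ | p.1 ≠ 0 ∧ Real.exp (-c) < ‖p.1‖ ∧ ‖p.1‖ < Real.exp c ∧
    R < ‖p.2‖ ∧ -Complex.arg τ + ε < Complex.arg p.2 ∧
    Complex.arg p.2 < Real.pi - Complex.arg τ - ε}
/-- Cone in the variable `τ ξ`. -/
def Cn (τ : ℂ) (K H : ℝ) : Set ℂ :=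
  {ξ | H < (τ * ξ).im ∧ |(τ * ξ).re| < K * (τ * ξ).im}

lemma cone_sub_sector (τ : ℂ) (hτ : 0 < τ.im) (K : ℝ) (hK : 0 < K) :
    ∃ ε > 0, ∀ R : ℝ, ∃ H > 0, ∀ ξ ∈ Cn τ K H,
      R < ‖ξ‖ ∧ -arg τ + ε < arg ξ ∧ arg ξ < Real.pi - arg τ - ε := by
  have hτ0 : τ ≠ 0 := by rintro rfl; simp at hτ
  have hτn : 0 < ‖τ‖ := norm_pos_iff.2 hτ0
  have hS : 0 < √(1 + K ^ 2) := Real.sqrt_pos.2 (by positivity)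
  have hS2 : √(1 + K ^ 2) ^ 2 = 1 + K ^ 2 := Real.sq_sqrt (by positivity)
  have hk1 : K / √(1 + K ^ 2) < 1 := by
    rw [div_lt_one hS]
    apply Real.lt_sqrt_of_sq_lt; linarith
  have hk0 : 0 < K / √(1 + K ^ 2) := by positivity
  refine ⟨Real.arccos (K / √(1 + K ^ 2)), Real.arccos_pos.2 hk1, fun R => ⟨‖τ‖ * |R| + 1, by positivity, ?_⟩⟩
  rintro ξ ⟨h1, h2⟩
  set ζ := τ * ξ with hζ
  have him : 0 < ζ.im := lt_trans (by positivity) h1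
  have hζ0 : ζ ≠ 0 := by intro h; rw [h] at him; simp at him
  have hζn : 0 < ‖ζ‖ := norm_pos_iff.2 hζ0
  have hn : ‖ζ‖ = ‖τ‖ * ‖ξ‖ := by rw [hζ, norm_mul]
  have hle : ζ.im ≤ ‖ζ‖ := (le_abs_self _).trans (abs_im_le_norm ζ)
  have hre : |ζ.re| < K / √(1 + K ^ 2) * ‖ζ‖ := by
    apply abs_lt_of_sq_lt_sq _ (by positivity)
    rw [mul_pow, div_pow, hS2, Complex.sq_norm, Complex.normSq_apply]
    have : ζ.re ^ 2 < (K * ζ.im) ^ 2 := sq_lt_sq' (by linarith [neg_abs_le ζ.re]) (lt_of_le_of_lt (le_abs_self _) h2)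
    rw [div_mul_eq_mul_div, lt_div_iff₀ (by positivity)]
    nlinarith
  have harg : arg ζ = Real.arccos (ζ.re / ‖ζ‖) := arg_of_im_pos him
  have hb1 : ζ.re / ‖ζ‖ < K / √(1 + K ^ 2) := by
    rw [div_lt_iff₀ hζn]; exact (le_abs_self _).trans_lt hre
  have hb2 : -(K / √(1 + K ^ 2)) < ζ.re / ‖ζ‖ := by
    rw [lt_div_iff₀ hζn]; linarith [neg_abs_le ζ.re]
  have ha1 : Real.arccos (K / √(1 + K ^ 2)) < arg ζ := by
    rw [harg]; exact Real.arccos_lt_arccos (by linarith) hb1 hk1.le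
  have ha2 : arg ζ < Real.pi - Real.arccos (K / √(1 + K ^ 2)) := by
    rw [harg, ← Real.arccos_neg]; exact Real.arccos_lt_arccos (by linarith) hb2 (by linarith)
  have hp := Real.arccos_pos.2 hk1
  have ht1 : 0 < arg τ := by
    rcases (arg_nonneg_iff.2 hτ.le).lt_or_eq with h | h
    · exact h
    · rw [eq_comm, arg_eq_zero_iff] at h; linarith [h.2]
  have ht2 : arg τ < Real.pi := arg_lt_pi_iff.2 (Or.inr hτ.ne')
  have hξ : arg ξ = arg ζ - arg τ := by
    have e : ξ = ζ * τ⁻¹ := by rw [hζ]; field_simp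
    have e2 : arg τ⁻¹ = - arg τ := by rw [arg_inv, if_neg ht2.ne]
    rw [e, arg_mul hζ0 (inv_ne_zero hτ0), e2]; · ring
    rw [e2]; constructor <;> linarith
  refine ⟨?_, by linarith, by linarith⟩
  have : ‖τ‖ * |R| < ‖τ‖ * ‖ξ‖ := by linarith
  exact (le_abs_self R).trans_lt (lt_of_mul_lt_mul_left this hτn.le)

lemma sector_sub_cone (τ : ℂ) (hτ : 0 < τ.im) (ε : ℝ) (hε : 0 < ε) :
    ∃ K > 0, ∀ H : ℝ, ∃ R > 0, ∀ ξ : ℂ, R < ‖ξ‖ → -arg τ + ε < arg ξ →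
      arg ξ < Real.pi - arg τ - ε → ξ ∈ Cn τ K H := by
  have hτ0 : τ ≠ 0 := by rintro rfl; simp at hτ
  have hτn : 0 < ‖τ‖ := norm_pos_iff.2 hτ0
  have hpi := Real.pi_pos
  set δ := min ε (Real.pi / 2) with hδ
  have hδ0 : 0 < δ := lt_min hε (by positivity)
  have hδ1 : δ ≤ Real.pi / 2 := min_le_right _ _
  have hδ2 : δ ≤ ε := min_le_left _ _
  have hs : 0 < Real.sin δ := Real.sin_pos_of_pos_of_lt_pi hδ0 (by linarith)
  refine ⟨2 / Real.sin δ, by positivity, fun H => ⟨(|H| + 1) / (‖τ‖ * Real.sin δ), by positivity, ?_⟩⟩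
  intro ξ h1 h2 h3
  have hξn : 0 < ‖ξ‖ := lt_trans (by positivity) h1
  have hξ0 : ξ ≠ 0 := norm_pos_iff.1 hξn
  have ha : arg (τ * ξ) = arg τ + arg ξ := by
    apply arg_mul hτ0 hξ0
    constructor <;> linarith
  set ζ := τ * ξ with hζ
  have hζ0 : ζ ≠ 0 := mul_ne_zero hτ0 hξ0
  have hζn : 0 < ‖ζ‖ := norm_pos_iff.2 hζ0
  have hn : ‖ζ‖ = ‖τ‖ * ‖ξ‖ := by rw [hζ, norm_mul]
  have hsin : Real.sin δ ≤ Real.sin (arg ζ) := by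
    rcases le_total (arg ζ) (Real.pi / 2) with h | h
    · apply Real.sin_le_sin_of_le_of_le_pi_div_two <;> linarith
    · rw [← Real.sin_pi_sub (arg ζ)]
      apply Real.sin_le_sin_of_le_of_le_pi_div_two <;> linarith
  rw [sin_arg, le_div_iff₀ hζn] at hsin
  have h1' : |H| + 1 < Real.sin δ * ‖ζ‖ := by
    rw [div_lt_iff₀ (by positivity)] at h1; rw [hn]; linarith
  have hre := abs_re_le_norm ζ
  refine ⟨by linarith [le_abs_self H], ?_⟩
  show |ζ.re| < 2 / Real.sin δ * ζ.im
  rw [div_mul_eq_mul_div, lt_div_iff₀ hs]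
  have : |ζ.re| * Real.sin δ ≤ ‖ζ‖ * Real.sin δ := mul_le_mul_of_nonneg_right hre hs.le
  linarith [mul_pos hζn hs]

lemma liouville_type (E : ℂ → ℂ) (hE : Differentiable ℂ E)
    (hb : ∀ δ > 0, ∃ C : ℝ, ∀ ξ, ‖E ξ‖ ≤ C * Real.exp (δ * |ξ.im|)) (x y : ℂ) : E x = E y := by
  obtain ⟨C1, hC1⟩ := hb 1 one_pos
  have hC10 : 0 ≤ C1 := by
    have := hC1 0
    simp at this
    exact (norm_nonneg _).trans this
  have key : ∀ s : ℂ, (s = I ∨ s = -I) → ∀ z : ℂ, 0 ≤ z.re → ‖E (s * z)‖ ≤ C1 := by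
    intro s hs z hz
    have hsim : ∀ w : ℂ, |(s * w).im| = |w.re| := by
      rcases hs with rfl | rfl <;> intro w <;> simp
    have hδ : ∀ δ > 0, ‖E (s * z)‖ ≤ C1 * Real.exp (δ * z.re) := by
      intro δ hδ
      obtain ⟨C, hC⟩ := hb δ hδ
      have hnorm : ∀ w : ℂ, ‖E (s * w) * Complex.exp (-(δ * w))‖ = ‖E (s * w)‖ * Real.exp (- (δ * w.re)) := by
        intro w
        rw [norm_mul, Complex.norm_exp]; simp
      have := PhragmenLindelof.right_half_plane_of_bounded_on_real
        (f := fun w => E (s * w) * Complex.exp (-(δ * w))) (C := C1) (z := z) ?_ ?_ ?_ ?_ hz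
      · rw [hnorm, Real.exp_neg, ← div_eq_mul_inv, div_le_iff₀ (Real.exp_pos _)] at this
        exact this
      · apply Differentiable.diffContOnCl
        fun_prop
      · refine ⟨1, by norm_num, 0, ?_⟩
        apply Asymptotics.IsBigO.of_bound C
        refine Filter.eventually_inf_principal.2 (Filter.Eventually.of_forall fun w hw => ?_)
        have hw' : 0 < w.re := hw
        rw [hnorm]
        have h := hC (s * w)
        rw [hsim, abs_of_pos hw'] at h
        rw [Real.exp_neg, ← div_eq_mul_inv, div_le_iff₀ (Real.exp_pos _)]
        simpa using h
      · refine ⟨C, ?_⟩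
        rw [Filter.eventually_map]
        filter_upwards [Filter.eventually_gt_atTop 0] with w hw
        rw [hnorm]
        have h := hC (s * w)
        rw [hsim, ofReal_re, abs_of_pos hw] at h
        rw [ofReal_re, Real.exp_neg, ← div_eq_mul_inv, div_le_iff₀ (Real.exp_pos _)]
        exact h
      · intro w
        rw [hnorm]
        have h := hC1 (s * (w * I))
        rw [hsim] at h
        simpa using h
    have ht : Filter.Tendsto (fun δ : ℝ => C1 * Real.exp (δ * z.re)) (nhdsWithin 0 (Set.Ioi 0)) (nhds C1) := by
      have : ContinuousAt (fun δ : ℝ => C1 * Real.exp (δ * z.re)) 0 := by fun_prop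
      have h2 := this.tendsto
      simp at h2
      exact h2.mono_left nhdsWithin_le_nhds
    exact ge_of_tendsto ht (by filter_upwards [self_mem_nhdsWithin] with δ h; exact hδ δ h)
  apply hE.apply_eq_apply_of_bounded
  rw [isBounded_iff_forall_norm_le]
  refine ⟨C1, ?_⟩
  rintro _ ⟨w, rfl⟩
  rcases le_total 0 w.im with h | h
  · have := key I (Or.inl rfl) (-I * w) (by simpa using h)
    rwa [← mul_assoc, mul_neg, I_mul_I, neg_neg, one_mul] at this
  · have := key (-I) (Or.inr rfl) (I * w) (by simpa using h)
    rwa [← mul_assoc, neg_mul, I_mul_I, neg_neg, one_mul] at this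

lemma dparam (F : ℂ → ℝ → ℂ) (V : Set ℂ) (hV : IsOpen V) (a b M : ℝ)
    (hc : ∀ x ∈ V, Continuous (F x)) (hd : ∀ t, DifferentiableOn ℂ (fun x => F x t) V)
    (hM : ∀ x ∈ V, ∀ t, ‖F x t‖ ≤ M) :
    DifferentiableOn ℂ (fun x => ∫ t in a..b, F x t) V := by
  intro x0 hx0
  obtain ⟨ρ', hρ', hball'⟩ := Metric.isOpen_iff.1 hV x0 hx0
  obtain ⟨ρ, hρ, rfl⟩ : ∃ ρ > 0, ρ' = 3 * ρ := ⟨ρ' / 3, by positivity, by ring⟩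
  have hdd : ∀ t, ∀ x ∈ V, HasDerivAt (fun x => F x t) (deriv (fun x => F x t) x) x :=
    fun t x hx => ((hd t).differentiableAt (hV.mem_nhds hx)).hasDerivAt
  have := intervalIntegral.hasDerivAt_integral_of_dominated_loc_of_deriv_le (a := a) (b := b)
    (μ := MeasureTheory.volume)
    (F := F) (F' := fun x t => deriv (fun x => F x t) x) (x₀ := x0) (s := Metric.ball x0 ρ)
    (bound := fun _ => M / ρ) (Metric.ball_mem_nhds _ hρ) ?_ ?_ ?_ ?_ ?_ ?_
  · exact this.2.differentiableAt.differentiableWithinAt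
  · filter_upwards [hV.mem_nhds hx0] with x hx
    exact (hc x hx).aestronglyMeasurable
  · exact (hc x0 hx0).intervalIntegrable _ _
  · have hmem : ∀ n : ℕ, x0 + (ρ / ((n : ℝ) + 1) : ℝ) ∈ V := by
      intro n
      apply hball'
      rw [Metric.mem_ball, dist_eq_norm, add_sub_cancel_left, norm_real, Real.norm_eq_abs,
        abs_of_pos (by positivity)]
      have : ρ / ((n : ℝ) + 1) ≤ ρ := div_le_self hρ.le (by linarith [(Nat.cast_nonneg n : (0:ℝ) ≤ n)])
      linarith
    apply MeasureTheory.StronglyMeasurable.aestronglyMeasurable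
    refine stronglyMeasurable_of_tendsto Filter.atTop
      (f := fun (n : ℕ) t => ((ρ / ((n : ℝ) + 1) : ℝ) : ℂ)⁻¹ • (F (x0 + (ρ / ((n : ℝ) + 1) : ℝ)) t - F x0 t)) ?_ ?_
    · intro n
      have h : Continuous (fun t => ((ρ / ((n : ℝ) + 1) : ℝ) : ℂ)⁻¹ • (F (x0 + (ρ / ((n : ℝ) + 1) : ℝ)) t - F x0 t)) := by
        have h1 := hc _ (hmem n)
        have h2 := hc x0 hx0
        fun_prop
      exact h.stronglyMeasurable
    · rw [tendsto_pi_nhds]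
      intro t
      have h1 := (hasDerivAt_iff_tendsto_slope_zero.1 (hdd t x0 hx0))
      refine h1.comp (tendsto_nhdsWithin_iff.2 ⟨?_, ?_⟩)
      · have : Filter.Tendsto (fun n : ℕ => (ρ / ((n : ℝ) + 1) : ℝ)) Filter.atTop (nhds 0) := by
          have := (tendsto_one_div_add_atTop_nhds_zero_nat (𝕜 := ℝ)).const_mul ρ
          simpa [div_eq_mul_inv] using this
        have h3 := (Complex.continuous_ofReal.tendsto 0).comp this
        rw [ofReal_zero] at h3
        exact h3
      · refine Filter.Eventually.of_forall fun n => ?_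
        have : (ρ / ((n : ℝ) + 1) : ℝ) ≠ 0 := by positivity
        exact ofReal_ne_zero.2 this
  · refine Filter.Eventually.of_forall fun t _ x hx => ?_
    have hsub : Metric.closedBall x ρ ⊆ V := by
      intro y hy
      apply hball'
      rw [Metric.mem_closedBall] at hy
      rw [Metric.mem_ball] at hx ⊢
      linarith [dist_triangle y x x0]
    apply norm_deriv_le_of_forall_mem_sphere_norm_le hρ
    · apply DifferentiableOn.diffContOnCl_ball (U := V) (hd t) hsub
    · intro y hy
      exact hM y (hsub (Metric.sphere_subset_closedBall hy)) t
  · exact intervalIntegrable_const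
  · refine Filter.Eventually.of_forall fun t _ x hx => hdd t x (hball' ?_)
    exact Metric.ball_subset_ball (by linarith) hx

/-- Laurent coefficients in `z` of `f(z, ξ)`, on the circle of radius `ρ`. -/
noncomputable def cf (f : ℂ × ℂ → ℂ) (n : ℤ) (ρ : ℝ) (ξ : ℂ) : ℂ :=
  Real.circleAverage (fun z => z ^ (-n) * f (z, ξ)) 0 ρ

lemma cf_radius (f : ℂ × ℂ → ℂ) (n : ℤ) (ξ : ℂ) (r R : ℝ) (hr : 0 < r) (hrR : r ≤ R)
    (hf : ∀ z : ℂ, r ≤ ‖z‖ → ‖z‖ ≤ R → DifferentiableAt ℂ (fun z => f (z, ξ)) z) :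
    cf f n R ξ = cf f n r ξ := by
  have hd : ∀ z : ℂ, r ≤ ‖z‖ → ‖z‖ ≤ R → DifferentiableAt ℂ (fun z => z ^ (-n) * f (z, ξ)) z := by
    intro z h1 h2
    have hz : z ≠ 0 := norm_pos_iff.1 (hr.trans_le h1)
    exact (differentiableAt_zpow.2 (Or.inl hz)).mul (hf z h1 h2)
  unfold cf
  rw [Real.circleAverage_eq_circleIntegral hr.ne',
    Real.circleAverage_eq_circleIntegral (hr.trans_le hrR).ne']
  congr 1
  apply circleIntegral_sub_center_inv_smul_eq_of_differentiable_on_annulus_off_countable hr hrR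
    Set.countable_empty
  · intro z hz
    simp at hz
    exact (hd z hz.2 hz.1).continuousAt.continuousWithinAt
  · intro z hz
    simp at hz
    exact hd z hz.2.le hz.1.le

lemma cf_norm (f : ℂ × ℂ → ℂ) (n : ℤ) (ξ : ℂ) (η : ℝ) (h : ∀ z : ℂ, ‖z‖ = 1 → ‖f (z, ξ)‖ ≤ η) :
    ‖cf f n 1 ξ‖ ≤ η := by
  unfold cf Real.circleAverage
  have := intervalIntegral.norm_integral_le_of_norm_le_const (a := 0) (b := 2 * Real.pi) (C := η)
    (f := fun θ => (fun z => z ^ (-n) * f (z, ξ)) (circleMap 0 1 θ)) ?_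
  · rw [norm_smul, Real.norm_eq_abs, abs_of_pos (by positivity)]
    rw [sub_zero, abs_of_pos (by positivity)] at this
    rw [inv_mul_le_iff₀ (by positivity)]
    linarith
  · intro θ _
    have : ‖circleMap 0 1 θ‖ = 1 := by simp
    simpa using h _ this

lemma cf_shift (f : ℂ × ℂ → ℂ) (n : ℤ) (ξ ξ' q : ℂ)
    (h : ∀ z : ℂ, ‖z‖ = 1 → f (q * z, ξ) = f (z, ξ')) :
    cf f n ‖q‖ ξ = q ^ (-n) * cf f n 1 ξ' := by
  unfold cf
  rw [Real.circleAverage_eq_integral_add (arg q), Real.circleAverage_def, mul_smul_comm,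
    ← intervalIntegral.integral_const_mul]
  congr 1
  apply intervalIntegral.integral_congr
  intro θ _
  have e : circleMap 0 ‖q‖ (θ + arg q) = q * circleMap 0 1 θ := by
    conv_rhs => rw [← norm_mul_exp_arg_mul_I q]
    simp only [circleMap, zero_add, ofReal_one, one_mul, ofReal_add, add_mul, Complex.exp_add]
    ring
  have h1 : ‖circleMap 0 1 θ‖ = 1 := by simp
  simp only [e]
  rw [h _ h1, mul_zpow]; ring

lemma cf_diff (f : ℂ × ℂ → ℂ) (n : ℤ) (V : Set ℂ) (hV : IsOpen V) (M : ℝ)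
    (hf : ∀ z ξ : ℂ, ‖z‖ = 1 → ξ ∈ V → DifferentiableAt ℂ f (z, ξ))
    (hM : ∀ z ξ : ℂ, ‖z‖ = 1 → ξ ∈ V → ‖f (z, ξ)‖ ≤ M) :
    DifferentiableOn ℂ (cf f n 1) V := by
  unfold cf Real.circleAverage
  have h1 : ∀ θ : ℝ, ‖circleMap 0 1 θ‖ = 1 := by simp
  have h0 : ∀ θ : ℝ, circleMap 0 1 θ ≠ 0 := by simp
  apply DifferentiableOn.const_smul
  apply dparam _ V hV _ _ M
  · intro ξ hξ
    have hc : Continuous (circleMap 0 1) := continuous_circleMap 0 1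
    apply Continuous.mul
    · exact hc.zpow₀ _ (fun θ => Or.inl (h0 θ))
    · rw [continuous_iff_continuousAt]
      intro θ
      exact ContinuousAt.comp (f := fun θ => (circleMap 0 1 θ, ξ)) (g := f)
        (hf _ ξ (h1 θ) hξ).continuousAt (by fun_prop)
  · intro θ ξ hξ
    apply DifferentiableAt.differentiableWithinAt
    apply DifferentiableAt.const_mul
    exact DifferentiableAt.comp (f := fun ξ => (circleMap 0 1 θ, ξ)) (g := f) ξ
      (hf _ ξ (h1 θ) hξ) (by fun_prop)
  · intro ξ hξ θ
    simpa using hM _ ξ (h1 θ) hξ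

lemma cf_fourier (f : ℂ × ℂ → ℂ) (z ξ : ℂ) (hz : z ≠ 0)
    (hf : ∀ w : ℂ, ‖w‖ = ‖z‖ → ContinuousAt (fun w => f (w, ξ)) w)
    (hs : Summable (fun n : ℤ => (‖z‖ : ℂ) ^ n * cf f n ‖z‖ ξ)) :
    HasSum (fun n : ℤ => cf f n ‖z‖ ξ * z ^ n) (f (z, ξ)) := by
  have : Fact (0 < 2 * Real.pi) := ⟨by positivity⟩
  have hρ : (‖z‖ : ℂ) ≠ 0 := by simpa using hz
  have hpi : (Real.pi : ℂ) ≠ 0 := by simp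
  let F : C(AddCircle (2 * Real.pi), ℂ) :=
    ⟨fun x => f (‖z‖ * (AddCircle.toCircle x : ℂ), ξ), by
      rw [continuous_iff_continuousAt]
      intro x
      refine ContinuousAt.comp (g := fun w => f (w, ξ)) (f := fun x => (‖z‖ * (AddCircle.toCircle x : ℂ))) (hf _ (by rw [norm_mul, Circle.norm_coe]; simp)) ?_
      have := AddCircle.continuous_toCircle (T := 2 * Real.pi)
      fun_prop⟩
  have hF : ∀ θ : ℝ, F (θ : AddCircle (2 * Real.pi)) = f (circleMap 0 ‖z‖ θ, ξ) := by
    intro θ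
    show f (‖z‖ * (AddCircle.toCircle (θ : AddCircle (2 * Real.pi)) : ℂ), ξ) = _
    rw [AddCircle.toCircle_apply_mk, Circle.coe_exp]
    simp only [circleMap, zero_add]
    congr 5
    field_simp
  have hfo : ∀ (n : ℤ) (θ : ℝ), (‖z‖ : ℂ) ^ n * fourier n (θ : AddCircle (2 * Real.pi)) = (circleMap 0 ‖z‖ θ) ^ n := by
    intro n θ
    rw [fourier_coe_apply, circleMap, zero_add, mul_zpow, ← Complex.exp_int_mul]
    congr 2
    push_cast
    field_simp
  have hco : ∀ n : ℤ, fourierCoeff F n = (‖z‖ : ℂ) ^ n * cf f n ‖z‖ ξ := by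
    intro n
    rw [fourierCoeff_eq_intervalIntegral F n 0, cf, Real.circleAverage_def, mul_smul_comm,
      ← intervalIntegral.integral_const_mul, one_div, zero_add]
    congr 1
    apply intervalIntegral.integral_congr
    intro θ _
    simp only [smul_eq_mul]
    rw [hF, ← hfo, zpow_neg]
    field_simp
  have hs' : Summable (fourierCoeff F) := by
    rw [show fourierCoeff F = _ from funext hco]; exact hs
  have := has_pointwise_sum_fourier_series_of_summable hs' ((arg z : ℝ) : AddCircle (2 * Real.pi))
  have hza : circleMap 0 ‖z‖ (arg z) = z := by simp [circleMap]
  rw [hF, hza] at this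
  convert this using 2 with n
  rw [hco, smul_eq_mul, mul_right_comm, hfo, hza, mul_comm]

lemma Cn_open (τ : ℂ) (K H : ℝ) : IsOpen (Cn τ K H) := by
  have c1 : Continuous fun ξ : ℂ => (τ * ξ).im := by fun_prop
  have c2 : Continuous fun ξ : ℂ => (τ * ξ).re := by fun_prop
  exact (isOpen_lt continuous_const c1).inter (isOpen_lt c2.abs (c1.const_mul K))

lemma Cn_add (τ : ℂ) (hτ : 0 < τ.im) (K H : ℝ) (hK : |τ.re| / τ.im + 1 ≤ K) (ξ : ℂ)
    (h : ξ ∈ Cn τ K H) (m : ℕ) : ξ + m ∈ Cn τ K H := by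
  have hK' : |τ.re| + τ.im ≤ K * τ.im := by
    have := mul_le_mul_of_nonneg_right hK hτ.le
    rwa [add_mul, div_mul_cancel₀ _ hτ.ne', one_mul] at this
  obtain ⟨h1, h2⟩ := h
  have e1 : (τ * (ξ + m)).im = (τ * ξ).im + τ.im * m := by simp; ring
  have e2 : (τ * (ξ + m)).re = (τ * ξ).re + τ.re * m := by simp; ring
  have hm : (0 : ℝ) ≤ m := Nat.cast_nonneg m
  constructor
  · rw [e1]; nlinarith
  · rw [e1, e2]
    have h3 := abs_add_le (τ * ξ).re (τ.re * m)
    rw [abs_mul, abs_of_nonneg hm] at h3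
    have h4 := mul_le_mul_of_nonneg_right hK' hm
    nlinarith

lemma Cn_exists (τ : ℂ) (hτ : 0 < τ.im) (K H : ℝ) (hK : |τ.re| / τ.im + 1 ≤ K) (ξ : ℂ) :
    ∃ m0 : ℕ, ∀ m : ℕ, m0 ≤ m → ξ + m ∈ Cn τ K H := by
  have hK' : |τ.re| + τ.im ≤ K * τ.im := by
    have := mul_le_mul_of_nonneg_right hK hτ.le
    rwa [add_mul, div_mul_cancel₀ _ hτ.ne', one_mul] at this
  obtain ⟨m0, hm0⟩ := exists_nat_gt ((|H| + |(τ * ξ).im| + |(τ * ξ).re| + |K * (τ * ξ).im|) / τ.im)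
  rw [div_lt_iff₀ hτ] at hm0
  refine ⟨m0, fun m hmm => ?_⟩
  have e1 : (τ * (ξ + m)).im = (τ * ξ).im + τ.im * m := by simp; ring
  have e2 : (τ * (ξ + m)).re = (τ * ξ).re + τ.re * m := by simp; ring
  have hm : (0 : ℝ) ≤ m := Nat.cast_nonneg m
  have hmm' : (m0 : ℝ) ≤ m := Nat.cast_le.2 hmm
  have h5 := mul_le_mul_of_nonneg_right hmm' hτ.le
  have a1 := abs_nonneg H
  have a2 := abs_nonneg (τ * ξ).im
  have a3 := abs_nonneg (τ * ξ).re
  have a4 := abs_nonneg (K * (τ * ξ).im)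
  have a5 := neg_abs_le (τ * ξ).im
  have a6 := neg_abs_le (K * (τ * ξ).im)
  have a7 := le_abs_self H
  constructor
  · rw [e1]; linarith
  · rw [e1, e2]
    have h3 := abs_add_le (τ * ξ).re (τ.re * m)
    rw [abs_mul, abs_of_nonneg hm] at h3
    have h4 := mul_le_mul_of_nonneg_right hK' hm
    nlinarith

/-- Normalised coefficient, `1`-periodic in `ξ`. -/
noncomputable def Bc (τ : ℂ) (f : ℂ × ℂ → ℂ) (n : ℤ) (ξ : ℂ) : ℂ :=
  cf f n 1 ξ * Complex.exp (-(2 * (Real.pi : ℂ) * I * n * (τ * ξ)))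

lemma norm_exp_aux (n : ℤ) (w : ℂ) :
    ‖Complex.exp (-(2 * (Real.pi : ℂ) * I * n * w))‖ = Real.exp (2 * Real.pi * n * w.im) := by
  rw [Complex.norm_exp]
  congr 1
  simp

lemma coeff_const (τ : ℂ) (hτ : 0 < τ.im) (f : ℂ × ℂ → ℂ) (M : ℝ) (Hf : ℝ → ℝ)
    (hHf : ∀ K > 0, 0 < Hf K)
    (hdiff : ∀ K > 0, ∀ z ξ : ℂ, Real.exp (-(2 * Real.pi * τ.im)) ≤ ‖z‖ → ‖z‖ ≤ 1 →
      ξ ∈ Cn τ K (Hf K) → DifferentiableAt ℂ f (z, ξ))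
    (hM : ∀ K > 0, ∀ z ξ : ℂ, Real.exp (-(2 * Real.pi * τ.im)) ≤ ‖z‖ → ‖z‖ ≤ 1 →
      ξ ∈ Cn τ K (Hf K) → ‖f (z, ξ)‖ ≤ M)
    (hinv : ∀ K > 0, ∀ z ξ : ℂ, ‖z‖ = 1 → ξ ∈ Cn τ K (Hf K) → ξ + 1 ∈ Cn τ K (Hf K) →
      f (Complex.exp (2 * (Real.pi : ℂ) * I * τ) * z, ξ) = f (z, ξ + 1)) :
    ∃ β : ℤ → ℂ, (∀ n < 0, β n = 0) ∧
      ∀ K, |τ.re| / τ.im + 1 ≤ K → ∀ ξ ∈ Cn τ K (Hf K), ∀ n : ℤ,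
        cf f n 1 ξ = β n * Complex.exp (2 * (Real.pi : ℂ) * I * n * (τ * ξ)) := by
  have hpi := Real.pi_pos
  set q := Complex.exp (2 * (Real.pi : ℂ) * I * τ) with hq
  have hqn : ‖q‖ = Real.exp (-(2 * Real.pi * τ.im)) := by
    rw [hq, Complex.norm_exp]; congr 1; simp
  have hq1 : ‖q‖ ≤ 1 := by
    rw [hqn, Real.exp_le_one_iff]; have := mul_pos hpi hτ; linarith
  have hKpos : ∀ K, |τ.re| / τ.im + 1 ≤ K → 0 < K := by
    intro K hK
    have : 0 ≤ |τ.re| / τ.im := by positivity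
    linarith
  have hnB : ∀ K > 0, ∀ ξ ∈ Cn τ K (Hf K), ∀ n, ‖cf f n 1 ξ‖ ≤ M := by
    intro K hK ξ hξ n
    exact cf_norm f n ξ M (fun z hz => hM K hK z ξ (by rw [← hqn, hz]; exact hq1) hz.le hξ)
  have hstep : ∀ K, |τ.re| / τ.im + 1 ≤ K → ∀ ξ ∈ Cn τ K (Hf K), ∀ n : ℤ,
      Bc τ f n (ξ + 1) = Bc τ f n ξ := by
    intro K hK ξ hξ n
    have hξ1 : ξ + 1 ∈ Cn τ K (Hf K) := by
      simpa using Cn_add τ hτ K _ hK ξ hξ 1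
    have h1 : cf f n 1 ξ = cf f n ‖q‖ ξ := by
      apply cf_radius
      · rw [hqn]; positivity
      · exact hq1
      · intro z h1 h2
        exact DifferentiableAt.comp (f := fun z => (z, ξ)) (g := f) z
          (hdiff K (hKpos K hK) z ξ (by rwa [← hqn]) h2 hξ) (by fun_prop)
    have h2 := cf_shift f n ξ (ξ + 1) q (fun z hz => hinv K (hKpos K hK) z ξ hz hξ hξ1)
    unfold Bc
    rw [h1, h2, hq, ← Complex.exp_int_mul, mul_comm (Complex.exp _) (cf f n 1 (ξ + 1)),
      mul_assoc (cf f n 1 (ξ + 1)), ← Complex.exp_add]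
    congr 2
    push_cast
    ring
  have hstepn : ∀ K, |τ.re| / τ.im + 1 ≤ K → ∀ ξ ∈ Cn τ K (Hf K), ∀ n : ℤ, ∀ m : ℕ,
      Bc τ f n (ξ + m) = Bc τ f n ξ := by
    intro K hK ξ hξ n m
    induction m with
    | zero => simp
    | succ m ih =>
      rw [← ih, ← hstep K hK _ (Cn_add τ hτ K _ hK ξ hξ m)]
      push_cast; rw [add_assoc]
  set K0 := |τ.re| / τ.im + 1 with hK0
  choose m0 hm0 using fun ξ => Cn_exists τ hτ K0 (Hf K0) le_rfl ξ
  let E : ℤ → ℂ → ℂ := fun n ξ => Bc τ f n (ξ + m0 ξ)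
  have hE : ∀ K, K0 ≤ K → ∀ ξ : ℂ, ∀ k : ℤ, ξ + k ∈ Cn τ K (Hf K) → ∀ n, E n ξ = Bc τ f n (ξ + k) := by
    intro K hK ξ k hk n
    have h1 := hstepn K0 le_rfl _ (hm0 ξ _ le_rfl) n (k - m0 ξ).toNat
    have h2 := hstepn K hK _ hk n (m0 ξ - k).toNat
    show Bc τ f n (ξ + m0 ξ) = _
    rw [← h1, ← h2]
    congr 1
    rw [add_assoc, add_assoc]
    congr 1
    have : (m0 ξ : ℤ) + ((k - m0 ξ).toNat : ℤ) = k + ((m0 ξ - k).toNat : ℤ) := by omega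
    exact_mod_cast congrArg (fun x : ℤ => (x : ℂ)) this
  have hEd : ∀ n, Differentiable ℂ (E n) := by
    intro n ξ0
    have hK0p := hKpos K0 le_rfl
    have hd : DifferentiableOn ℂ (Bc τ f n) (Cn τ K0 (Hf K0)) := by
      unfold Bc
      apply DifferentiableOn.mul
      · apply cf_diff f n _ (Cn_open _ _ _) M
        · intro z ξ hz hξ
          exact hdiff K0 hK0p z ξ (by rw [← hqn, hz]; exact hq1) hz.le hξ
        · intro z ξ hz hξ
          exact hM K0 hK0p z ξ (by rw [← hqn, hz]; exact hq1) hz.le hξ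
      · fun_prop
    have hmem := hm0 ξ0 _ le_rfl
    have hnh := (Cn_open τ K0 (Hf K0)).mem_nhds hmem
    have h1 : DifferentiableAt ℂ (fun ξ => Bc τ f n (ξ + m0 ξ0)) ξ0 :=
      DifferentiableAt.comp (f := fun ξ : ℂ => ξ + m0 ξ0) (g := Bc τ f n) ξ0 (hd.differentiableAt hnh) (by fun_prop)
    apply h1.congr_of_eventuallyEq
    have hc : ContinuousAt (fun ξ : ℂ => ξ + m0 ξ0) ξ0 := by fun_prop
    filter_upwards [hc.preimage_mem_nhds hnh] with ξ hξ
    have := hE K0 le_rfl ξ (m0 ξ0) (by simpa using hξ) n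
    simpa using this
  have hEconst : ∀ n, 0 ≤ n → ∀ x y, E n x = E n y := by
    intro n hn
    have hn' : (0 : ℝ) ≤ n := by exact_mod_cast hn
    apply liouville_type (E n) (hEd n)
    intro δ hδ
    obtain ⟨d, hd, hdd⟩ : ∃ d > 0, 2 * Real.pi * n * d ≤ δ := by
      refine ⟨δ / (2 * Real.pi * (n + 1)), by positivity, ?_⟩
      rw [mul_div_assoc', div_le_iff₀ (by positivity)]
      nlinarith [mul_pos hpi hδ]
    set K := K0 + |τ.re| / τ.im + ‖τ‖ ^ 2 / (τ.im * d) with hK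
    have hKK : K0 ≤ K := by
      have : 0 ≤ |τ.re| / τ.im + ‖τ‖ ^ 2 / (τ.im * d) := by positivity
      linarith
    have hKp := hKpos K hKK
    have hHp := hHf K hKp
    refine ⟨M * Real.exp (2 * Real.pi * n * (Hf K + 1 + τ.im)), fun ξ => ?_⟩
    set y := ξ.im with hy
    set k : ℤ := ⌈(d * |y| + Hf K + 1 - (τ * ξ).im) / τ.im⌉ with hk
    have hk1 := Int.le_ceil ((d * |y| + Hf K + 1 - (τ * ξ).im) / τ.im)
    have hk2 := Int.ceil_lt_add_one ((d * |y| + Hf K + 1 - (τ * ξ).im) / τ.im)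
    rw [← hk, div_le_iff₀ hτ] at hk1
    rw [← hk, ← sub_lt_iff_lt_add, lt_div_iff₀ hτ] at hk2
    have e1 : (τ * (ξ + k)).im = (τ * ξ).im + τ.im * k := by simp; ring
    set v := (τ * (ξ + k)).im with hv
    have hv1 : d * |y| + Hf K + 1 ≤ v := by linarith
    have hv2 : v ≤ d * |y| + Hf K + 1 + τ.im := by linarith
    have hdy : 0 ≤ d * |y| := by positivity
    have hv0 : 0 < v := by linarith
    have hmem : ξ + k ∈ Cn τ K (Hf K) := by
      refine ⟨by show Hf K < v; linarith, ?_⟩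
      show |(τ * (ξ + k)).re| < K * v
      have id1 : τ.im * (τ * (ξ + k)).re = τ.re * v - ‖τ‖ ^ 2 * y := by
        rw [Complex.sq_norm, Complex.normSq_apply, hv, hy]; simp; ring
      have h3 : τ.im * |(τ * (ξ + k)).re| ≤ |τ.re| * v + ‖τ‖ ^ 2 * |y| := by
        have h30 : τ.im * |(τ * (ξ + k)).re| = |τ.im * (τ * (ξ + k)).re| := by
          rw [abs_mul, abs_of_pos hτ]
        rw [h30, id1]
        refine (abs_sub _ _).trans ?_
        rw [abs_mul, abs_mul, abs_of_pos hv0, abs_of_nonneg (by positivity : (0 : ℝ) ≤ ‖τ‖ ^ 2)]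
      have h4 : τ.im * (K * v) = K0 * τ.im * v + |τ.re| * v + ‖τ‖ ^ 2 * (v / d) := by
        rw [hK]; field_simp
      have h5 : |y| ≤ v / d := by rw [le_div_iff₀ hd]; linarith
      have h6 : ‖τ‖ ^ 2 * |y| ≤ ‖τ‖ ^ 2 * (v / d) := by gcongr
      have h7 : 0 < K0 * τ.im * v := by have := hKpos K0 le_rfl; positivity
      apply lt_of_mul_lt_mul_left _ hτ.le
      linarith
    rw [hE K hKK ξ k hmem n, Bc, norm_mul, norm_exp_aux]
    have hM0 := hnB K hKp _ hmem n
    have hMn : 0 ≤ M := (norm_nonneg _).trans hM0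
    rw [mul_assoc M, ← Real.exp_add]
    apply mul_le_mul hM0 _ (Real.exp_pos _).le hMn
    rw [Real.exp_le_exp]
    have h8 : 2 * Real.pi * n * v ≤ 2 * Real.pi * n * (d * |y| + Hf K + 1 + τ.im) :=
      mul_le_mul_of_nonneg_left hv2 (by positivity)
    have h9 := mul_le_mul_of_nonneg_right hdd (abs_nonneg y)
    change 2 * Real.pi * n * v ≤ _
    linarith
  have hEneg : ∀ n < 0, ∀ x, E n x = 0 := by
    intro n hn x
    have hn' : (n : ℝ) ≤ -1 := by exact_mod_cast (by omega : n ≤ -1)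
    have hK0p := hKpos K0 le_rfl
    have hmem := hm0 x _ le_rfl
    have hb : ∀ m : ℕ, ‖E n x‖ ≤ M * Real.exp (-(2 * Real.pi * τ.im) * m) := by
      intro m
      have hm := Cn_add τ hτ K0 _ le_rfl _ hmem m
      have h1 := hstepn K0 le_rfl _ hmem n m
      show ‖Bc τ f n (x + m0 x)‖ ≤ _
      rw [← h1, Bc, norm_mul, norm_exp_aux]
      have hM0 := hnB K0 hK0p _ hm n
      have hMn : 0 ≤ M := (norm_nonneg _).trans hM0
      apply mul_le_mul hM0 _ (Real.exp_pos _).le hMn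
      rw [Real.exp_le_exp]
      have e1 : (τ * (x + m0 x + m)).im = (τ * (x + m0 x)).im + τ.im * m := by simp; ring
      have h2 : τ.im * m ≤ (τ * (x + m0 x + m)).im := by
        rw [e1]; linarith [hmem.1, hHf K0 hK0p]
      have h3 : 0 ≤ τ.im * m := by positivity
      have h4 : 2 * Real.pi * (τ.im * m) ≤ 2 * Real.pi * (τ * (x + m0 x + m)).im := by gcongr
      have h5 : 0 ≤ 2 * Real.pi * (τ.im * m) := by positivity
      nlinarith
    have ht : Filter.Tendsto (fun m : ℕ => M * Real.exp (-(2 * Real.pi * τ.im) * m)) Filter.atTop (nhds 0) := by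
      have h1 : Filter.Tendsto (fun m : ℕ => -(2 * Real.pi * τ.im) * (m : ℝ)) Filter.atTop Filter.atBot :=
        tendsto_natCast_atTop_atTop.const_mul_atTop_of_neg (by have := mul_pos hpi hτ; linarith)
      simpa using (Real.tendsto_exp_atBot.comp h1).const_mul M
    have := ge_of_tendsto' ht hb
    exact norm_le_zero_iff.1 this
  refine ⟨fun n => E n 0, fun n hn => hEneg n hn 0, ?_⟩
  intro K hK ξ hξ n
  have h1 : E n 0 = E n ξ := by
    rcases lt_or_ge n 0 with h | h
    · rw [hEneg n h, hEneg n h]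
    · exact hEconst n h _ _
  have h2 := hE K hK ξ 0 (by simpa using hξ) n
  show cf f n 1 ξ = E n 0 * _
  rw [h1, h2, Int.cast_zero, add_zero, Bc, mul_assoc, ← Complex.exp_add]
  simp

/-- a bounded holomorphic function on a transversely sectorial domain of
opening `(−ϖ, π − ϖ)` invariant under `F₁₀₀(z,ξ) = (qz, ξ−1)` is a first integral of the
fibration `Y(z,ξ) = z·exp(2πiτξ)`: it factors as `f(z,ξ) = g(z·exp(2πiτξ))` with `g`
holomorphic on a disc; if moreover `f` is (sup-)small at infinity then `g(0) = 0`. -/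
theorem statement6 (τ : ℂ) (hτ : 0 < τ.im)
    (U : Set (ℂ × ℂ)) (hUopen : IsOpen U) (hU0 : U ⊆ {p : ℂ × ℂ | p.1 ≠ 0})
    (hUsect : ∀ c : ℝ, 0 < c → ∀ ε : ℝ, 0 < ε → ∃ R : ℝ, 0 < R ∧ Tsector τ c ε R ⊆ U)
    (f : ℂ × ℂ → ℂ) (hf : DifferentiableOn ℂ f U)
    (hbd : ∃ M : ℝ, ∀ p ∈ U, ‖f p‖ ≤ M)
    (hinv : ∀ p : ℂ × ℂ, p ∈ U →
      (Complex.exp (2 * (Real.pi : ℂ) * Complex.I * τ) * p.1, p.2 - 1) ∈ U →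
      f (Complex.exp (2 * (Real.pi : ℂ) * Complex.I * τ) * p.1, p.2 - 1) = f p) :
    ∃ r : ℝ, 0 < r ∧ ∃ g : ℂ → ℂ,
      DifferentiableOn ℂ g {w : ℂ | ‖w‖ < r} ∧
      (∀ c : ℝ, 0 < c → ∀ ε : ℝ, 0 < ε → ∃ R : ℝ, 0 < R ∧
        ∀ p ∈ Tsector τ c ε R,
          f p = g (p.1 * Complex.exp (2 * (Real.pi : ℂ) * Complex.I * τ * p.2))) ∧
      ((∀ c : ℝ, 0 < c → ∀ ε : ℝ, 0 < ε → ∀ η : ℝ, 0 < η → ∃ R : ℝ, 0 < R ∧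
          ∀ p ∈ Tsector τ c ε R, ‖f p‖ ≤ η) → g 0 = 0) := by
  obtain ⟨M, hM⟩ := hbd
  have hpi := Real.pi_pos
  have hpτ := mul_pos hpi hτ
  set q := Complex.exp (2 * (Real.pi : ℂ) * Complex.I * τ) with hq
  have hqn : ‖q‖ = Real.exp (-(2 * Real.pi * τ.im)) := by
    rw [hq, Complex.norm_exp]; congr 1; simp
  have hz0 : ∀ (c : ℝ) (z : ℂ), Real.exp (-c) < ‖z‖ → z ≠ 0 := fun c z h =>
    norm_pos_iff.1 ((Real.exp_pos _).trans h)
  have hC : ∀ c > 0, ∀ K > 0, ∃ H > 0, ∀ z ξ : ℂ, Real.exp (-c) < ‖z‖ → ‖z‖ < Real.exp c →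
      ξ ∈ Cn τ K H → (z, ξ) ∈ U := by
    intro c hc K hK
    obtain ⟨ε, hε, h1⟩ := cone_sub_sector τ hτ K hK
    obtain ⟨R, hR, h2⟩ := hUsect c hc ε hε
    obtain ⟨H, hH, h3⟩ := h1 R
    refine ⟨H, hH, fun z ξ hz1 hz2 hξ => h2 ?_⟩
    exact ⟨hz0 c z hz1, hz1, hz2, h3 ξ hξ⟩
  set c0 := 2 * Real.pi * τ.im + 1 with hc0
  have hc0p : 0 < c0 := by linarith
  have hC' : ∀ K : ℝ, ∃ H : ℝ, 0 < K → 0 < H ∧ ∀ z ξ : ℂ, Real.exp (-c0) < ‖z‖ → ‖z‖ < Real.exp c0 →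
      ξ ∈ Cn τ K H → (z, ξ) ∈ U := by
    intro K
    by_cases hK : 0 < K
    · obtain ⟨H, h1, h2⟩ := hC c0 hc0p K hK
      exact ⟨H, fun _ => ⟨h1, h2⟩⟩
    · exact ⟨0, fun h => absurd h hK⟩
  choose Hf hHf using hC'
  have hexp0 : ∀ c > (0 : ℝ), 1 < Real.exp c := fun c hc => Real.one_lt_exp_iff.2 hc
  have hUf : ∀ K > 0, ∀ z ξ : ℂ, Real.exp (-(2 * Real.pi * τ.im)) ≤ ‖z‖ → ‖z‖ ≤ 1 →
      ξ ∈ Cn τ K (Hf K) → (z, ξ) ∈ U := by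
    intro K hK z ξ h1 h2 hξ
    refine (hHf K hK).2 z ξ (lt_of_lt_of_le ?_ h1) (lt_of_le_of_lt h2 (hexp0 _ hc0p)) hξ
    rw [Real.exp_lt_exp]; linarith
  have hfd : ∀ p ∈ U, DifferentiableAt ℂ f p := fun p hp => hf.differentiableAt (hUopen.mem_nhds hp)
  have hq1 : ‖q‖ ≤ 1 := by
    rw [hqn, Real.exp_le_one_iff]; linarith
  obtain ⟨β, hβneg, hβ⟩ := coeff_const τ hτ f M Hf (fun K hK => (hHf K hK).1)
    (fun K hK z ξ h1 h2 hξ => hfd _ (hUf K hK z ξ h1 h2 hξ))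
    (fun K hK z ξ h1 h2 hξ => hM _ (hUf K hK z ξ h1 h2 hξ))
    (by
      intro K hK z ξ hz hξ hξ1
      have h1 : (z, ξ + 1) ∈ U := hUf K hK z _ (by rw [hz, ← hqn]; exact hq1) hz.le hξ1
      have h2 : (q * z, ξ) ∈ U := hUf K hK _ ξ (by rw [norm_mul, hz, mul_one, hqn])
        (by rw [norm_mul, hz, mul_one]; exact hq1) hξ
      have := hinv (z, ξ + 1) h1 (by simpa using h2)
      simpa using this)
  set K0 := |τ.re| / τ.im + 1 with hK0
  have hK0p : 0 < K0 := by
    have : 0 ≤ |τ.re| / τ.im := by positivity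
    linarith
  obtain ⟨m0, hm0⟩ := Cn_exists τ hτ K0 (Hf K0) le_rfl 0
  have hξ0 := hm0 m0 le_rfl
  set ξ0 : ℂ := 0 + m0 with hξ0def
  set X := Real.exp (2 * Real.pi * (τ * ξ0).im) with hX
  have hXp : 0 < X := Real.exp_pos _
  have hcn : ∀ ξ : ℂ, ∀ η : ℝ, (∀ z : ℂ, ‖z‖ = 1 → ‖f (z, ξ)‖ ≤ η) → ∀ n, ‖cf f n 1 ξ‖ ≤ η :=
    fun ξ η h n => cf_norm f n ξ η h
  have hβb : ∀ n : ℕ, ‖β n‖ ≤ M * X ^ n := by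
    intro n
    have h1 := hβ K0 le_rfl ξ0 hξ0 n
    have h2 := hcn ξ0 M (fun z hz => hM _ (hUf K0 hK0p z ξ0 (by rw [hz, ← hqn]; exact hq1) hz.le hξ0)) n
    have h3 : β n = cf f n 1 ξ0 * Complex.exp (-(2 * (Real.pi : ℂ) * I * (n : ℤ) * (τ * ξ0))) := by
      rw [h1, mul_assoc, ← Complex.exp_add]; simp
    rw [h3, norm_mul, norm_exp_aux]
    have h4 : Real.exp (2 * Real.pi * (n : ℤ) * (τ * ξ0).im) = X ^ n := by
      rw [hX, ← Real.exp_nat_mul]; congr 1; push_cast; ring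
    rw [h4]
    gcongr
  have hMn : 0 ≤ M := by simpa using (norm_nonneg _).trans (hβb 0)
  set r := 1 / (2 * X) with hr
  have hrp : 0 < r := by positivity
  have hterm : ∀ n : ℕ, ∀ w : ℂ, ‖w‖ < r → ‖β n * w ^ n‖ ≤ M * (1 / 2) ^ n := by
    intro n w hw
    rw [norm_mul, norm_pow]
    calc ‖β n‖ * ‖w‖ ^ n ≤ (M * X ^ n) * r ^ n := by
          gcongr
          exact hβb n
      _ = M * (1 / 2) ^ n := by
          rw [mul_assoc, ← mul_pow, hr]; congr 2; field_simp
  have hsum : Summable (fun n : ℕ => M * (1 / 2 : ℝ) ^ n) := summable_geometric_two.mul_left M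
  refine ⟨r, hrp, fun w => ∑' n : ℕ, β n * w ^ n, ?_, ?_, ?_⟩
  · apply differentiableOn_tsum_of_summable_norm hsum
    · intro n; fun_prop
    · exact isOpen_lt continuous_norm continuous_const
    · intro n w hw; exact hterm n w hw
  · intro c hc ε hε
    obtain ⟨K1, hK1, hsec⟩ := sector_sub_cone τ hτ ε hε
    set K := max K0 K1 with hK
    have hK0K : K0 ≤ K := le_max_left _ _
    have hKp : 0 < K := hK0p.trans_le hK0K
    set c' := max c c0 with hc'
    have hc'p : 0 < c' := hc.trans_le (le_max_left _ _)
    obtain ⟨H1, hH1, hU1⟩ := hC c' hc'p K hKp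
    obtain ⟨H2, hH2⟩ : ∃ H2 : ℝ, ∀ v : ℝ, H2 < v → Real.exp c * Real.exp (-(2 * Real.pi * v)) < r := by
      refine ⟨(c - Real.log r) / (2 * Real.pi), fun v hv => ?_⟩
      rw [div_lt_iff₀ (by positivity)] at hv
      rw [← Real.exp_add, ← Real.lt_log_iff_exp_lt hrp]
      linarith
    set H := max (max H1 H2) (Hf K) with hH
    obtain ⟨R, hR, hRs⟩ := hsec H
    refine ⟨R, hR, ?_⟩
    rintro ⟨z, ξ⟩ ⟨hz, hz1, hz2, hξ1, hξ2, hξ3⟩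
    simp only at hz hz1 hz2 hξ1 hξ2 hξ3 ⊢
    obtain ⟨hξa, hξb⟩ := hRs ξ hξ1 hξ2 hξ3
    have hHf1 : Hf K ≤ H := le_max_right _ _
    have hH1H : H1 ≤ H := (le_max_left _ _).trans (le_max_left _ _)
    have hH2H : H2 ≤ H := (le_max_right _ _).trans (le_max_left _ _)
    have himp : 0 < (τ * ξ).im := by linarith
    have hξb' : |(τ * ξ).re| < K * (τ * ξ).im :=
      hξb.trans_le (mul_le_mul_of_nonneg_right (le_max_right _ _) himp.le)
    have hmf : ξ ∈ Cn τ K (Hf K) := ⟨hHf1.trans_lt hξa, hξb'⟩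
    have hm1 : ξ ∈ Cn τ K H1 := ⟨hH1H.trans_lt hξa, hξb'⟩
    have hz1' : Real.exp (-c') < ‖z‖ := by
      refine lt_of_le_of_lt ?_ hz1
      rw [Real.exp_le_exp]; linarith [le_max_left c c0]
    have hz2' : ‖z‖ < Real.exp c' := by
      refine lt_of_lt_of_le hz2 ?_
      rw [Real.exp_le_exp]; exact le_max_left c c0
    have hdz : ∀ w : ℂ, Real.exp (-c') < ‖w‖ → ‖w‖ < Real.exp c' →
        DifferentiableAt ℂ (fun w => f (w, ξ)) w := by
      intro w hw1 hw2
      exact DifferentiableAt.comp (f := fun z => (z, ξ)) (g := f) w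
          (hfd _ (hU1 w ξ hw1 hw2 hm1)) (by fun_prop)
    have hone1 : Real.exp (-c') < 1 := by rw [Real.exp_lt_one_iff]; linarith
    have hone2 : 1 < Real.exp c' := hexp0 _ hc'p
    have hrad : ∀ n, cf f n ‖z‖ ξ = cf f n 1 ξ := by
      intro n
      rcases le_total ‖z‖ 1 with h | h
      · symm
        apply cf_radius _ _ _ _ _ (norm_pos_iff.2 hz) h
        intro w hw1 hw2
        exact hdz w (by linarith) (by linarith)
      · apply cf_radius _ _ _ _ _ one_pos h
        intro w hw1 hw2
        exact hdz w (by linarith) (by linarith)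
    set e := Complex.exp (2 * (Real.pi : ℂ) * I * τ * ξ) with he
    have hcoef : ∀ n : ℤ, cf f n ‖z‖ ξ = β n * e ^ n := by
      intro n
      rw [hrad, hβ K hK0K ξ hmf n, he, ← Complex.exp_int_mul]
      congr 2; ring
    have hen : ‖e‖ = Real.exp (-(2 * Real.pi * (τ * ξ).im)) := by
      rw [he, Complex.norm_exp]; congr 1; simp; ring
    have hsmall : ‖z‖ * ‖e‖ < r := by
      refine lt_of_le_of_lt ?_ (hH2 _ (hH2H.trans_lt hξa))
      rw [hen]; gcongr
    have hinj : Function.Injective (fun n : ℕ => (n : ℤ)) := Nat.cast_injective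
    have hout : ∀ n : ℤ, n ∉ Set.range (fun n : ℕ => (n : ℤ)) → β n = 0 := by
      intro n hn
      apply hβneg
      by_contra h
      exact hn ⟨n.toNat, by simp; omega⟩
    have hs : Summable (fun n : ℤ => (‖z‖ : ℂ) ^ n * cf f n ‖z‖ ξ) := by
      rw [← hinj.summable_iff]
      · apply Summable.of_norm_bounded hsum
        intro n
        have := hterm n (‖z‖ * e) (by simpa using hsmall)
        refine le_of_eq_of_le ?_ this
        simp only [Function.comp, hcoef, zpow_natCast, mul_pow]
        congr 1; ring
      · intro n hn
        rw [hcoef, hout n hn]; simp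
    have hfs := cf_fourier f z ξ hz (fun w hw => (hdz w (by rw [hw]; exact hz1') (by rw [hw]; exact hz2')).continuousAt) hs
    rw [← hinj.hasSum_iff] at hfs
    · rw [← hfs.tsum_eq]
      apply tsum_congr
      intro n
      simp only [Function.comp, hcoef, zpow_natCast, mul_pow]
      ring
    · intro n hn
      rw [hcoef, hout n hn]; simp
  · intro hsm
    have hg0 : ∑' n : ℕ, β n * (0 : ℂ) ^ n = β 0 := by
      rw [tsum_eq_single 0]
      · simp
      · intro n hn; simp [hn]
    show ∑' n : ℕ, β n * (0 : ℂ) ^ n = 0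
    rw [hg0, ← norm_le_zero_iff]
    apply le_of_forall_pos_le_add
    intro η hη
    rw [zero_add]
    obtain ⟨ε, hε, h1⟩ := cone_sub_sector τ hτ K0 hK0p
    obtain ⟨R, hR, h2⟩ := hsm 1 one_pos ε hε η hη
    obtain ⟨H, hH, h3⟩ := h1 R
    obtain ⟨m1, hm1⟩ := Cn_exists τ hτ K0 (max H (Hf K0)) le_rfl 0
    obtain ⟨ha, hb⟩ := hm1 m1 le_rfl
    set ξ : ℂ := 0 + m1 with hξ
    have hmH : ξ ∈ Cn τ K0 H := ⟨(le_max_left _ _).trans_lt ha, hb⟩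
    have hmf : ξ ∈ Cn τ K0 (Hf K0) := ⟨(le_max_right _ _).trans_lt ha, hb⟩
    have h5 := hcn ξ η (fun z hz => h2 (z, ξ) ⟨norm_pos_iff.1 (by rw [hz]; exact one_pos),
      by rw [hz, Real.exp_lt_one_iff]; norm_num, by rw [hz]; exact hexp0 1 one_pos, h3 ξ hmH⟩) 0
    have h6 := hβ K0 le_rfl ξ hmf 0
    simp at h6
    rwa [h6] at h5
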